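/- For all λ-terms M and N and every variable x, T_r(M[N/x]) = { a[b⃗/x] | a ∈ T_r(M), b⃗ is a finite list of elements of T_r(N), and a[b⃗/x] ≠ 0 }, where M[N/x] is the capture-avoiding substitution of N for x in M. -/

import Mathlib

/-! Ordinary λ-terms, in de Bruijn notation. -/
inductive Lam : Type
  | var : ℕ → Lam
  | lam : Lam → Lam
  | app : Lam → Lam → Lam
  deriving DecidableEq

namespace Lam

/-- Shift the free indices `≥ d` up by one. -/
def lift (d : ℕ) : Lam → Lam
  | var n => if n < d then var n else var (n + 1)
  | lam M => lam (lift (d + 1) M)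
  | app P Q => app (lift d P) (lift d Q)

/-- Capture-avoiding substitution of `N` for the free variable `k`. -/
def subst : Lam → ℕ → Lam → Lam
  | var n, k, N => if n = k then N else if k < n then var (n - 1) else var n
  | lam M, k, N => lam (subst M (k + 1) (lift 0 N))
  | app P Q, k, N => app (subst P k N) (subst Q k N)

/-- Number of free occurrences of the variable `k`. -/
def count (k : ℕ) : Lam → ℕ
  | var n => if n = k then 1 else 0
  | lam M => count (k + 1) M
  | app P Q => count k P + count k Q

/-- One-step β-reduction. -/
inductive Beta : Lam → Lam → Prop
  | beta (M N : Lam) : Beta (app (lam M) N) (subst M 0 N)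
  | lam {M M'} : Beta M M' → Beta (lam M) (lam M')
  | appL {P P' Q} : Beta P P' → Beta (app P Q) (app P' Q)
  | appR {P Q Q'} : Beta Q Q' → Beta (app P Q) (app P Q')

/-- The head of the application spine is a variable, with no λ on the spine. -/
def neutral : Lam → Bool
  | var _ => true
  | lam _ => false
  | app P _ => neutral P

/-- Head-normal forms: `λx₁…λxₘ. x N₁ … Nₙ`. -/
def isHNF : Lam → Prop
  | var _ => True
  | lam M => isHNF M
  | app P _ => neutral P = true

/-- The head-reduction function `H`: contracts the head redex, identity on head-normal
forms. -/
def H : Lam → Lam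
  | var n => var n
  | lam M => lam (H M)
  | app (lam P) Q => subst P 0 Q
  | app (var n) Q => app (var n) Q
  | app (app P₁ P₂) Q => app (H (app P₁ P₂)) Q

/-- The left-parallel reduction function `L`: identity on β-normal forms, propagated to
the arguments on head-normal forms, contraction of the head redex otherwise. -/
def L : Lam → Lam
  | var n => var n
  | lam M => lam (L M)
  | app (lam P) Q => subst P 0 Q
  | app (var n) Q => app (var n) (L Q)
  | app (app P₁ P₂) Q =>
      if neutral (app P₁ P₂) then app (L (app P₁ P₂)) (L Q)
      else app (L (app P₁ P₂)) Q

/-- Iterated application `M N₁ … Nₙ`. -/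
def mkApps (M : Lam) (Ns : List Lam) : Lam := Ns.foldl app M

/-- All free variables are `< d`. -/
def ClosedAt (d : ℕ) : Lam → Prop
  | var n => n < d
  | lam M => ClosedAt (d + 1) M
  | app P Q => ClosedAt d P ∧ ClosedAt d Q

/-- `M` is head-normalizable: it β-reduces in finitely many steps to a head-normal form. -/
def HeadNormalizable (M : Lam) : Prop :=
  ∃ N, Relation.ReflTransGen Beta M N ∧ isHNF N

/-- `M` is a β-normal form: it contains no β-redex, i.e. admits no β-step. -/
def BetaNF (M : Lam) : Prop := ¬∃ N, Beta M N

/-- `M` is β-normalizable: it β-reduces in finitely many steps to a β-normal form. -/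
def BetaNormalizable (M : Lam) : Prop :=
  ∃ N, Relation.ReflTransGen Beta M N ∧ BetaNF N

/-- `M` is strongly β-normalizable: no infinite β-reduction sequence starts from `M`. -/
def StronglyNormalizable (M : Lam) : Prop := Acc (fun N M' => Beta M' N) M

end Lam

/-! Rigid resource terms (the nonzero ones), in de Bruijn notation:
`a ::= x | λx.a | ⟨c⟩d⃗` with `d⃗` a list of rigid terms.
The term `0` is represented by `none : Option Rig`. -/
inductive Rig : Type
  | var : ℕ → Rig
  | lam : Rig → Rig
  | app : Rig → List Rig → Rig

namespace Rig

mutual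
/-- Number of free occurrences of the variable `k` in a rigid term. -/
def countR (k : ℕ) : Rig → ℕ
  | var n => if n = k then 1 else 0
  | lam a => countR (k + 1) a
  | app c ds => countR k c + countRList k ds
termination_by a => sizeOf a

def countRList (k : ℕ) : List Rig → ℕ
  | [] => 0
  | d :: ds => countR k d + countRList k ds
termination_by ds => sizeOf ds
end

mutual
/-- Shift the free indices `≥ d` up by one. -/
def liftR (d : ℕ) : Rig → Rig
  | var n => if n < d then var n else var (n + 1)
  | lam a => lam (liftR (d + 1) a)
  | app c ds => app (liftR d c) (liftRList d ds)
termination_by a => sizeOf a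

def liftRList (d : ℕ) : List Rig → List Rig
  | [] => []
  | a :: as => liftR d a :: liftRList d as
termination_by as => sizeOf as
end

mutual
/-- Rigid substitution `a[b⃗/k]`: the list `b⃗` is distributed, in order, over the
free occurrences of the variable `k`; the result is `none` (i.e. `0`) when
`|b⃗| ≠ n_k(a)`. -/
def rsubst (k : ℕ) : Rig → List Rig → Option Rig
  | var n, bs =>
      if n = k then (match bs with | [b] => some b | _ => none)
      else (match bs with
            | [] => some (if k < n then var (n - 1) else var n)
            | _ => none)
  | lam a, bs => (rsubst (k + 1) a (liftRList 0 bs)).map lam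
  | app c ds, bs =>
      match rsubst k c (bs.take (countR k c)), rsubstList k ds (bs.drop (countR k c)) with
      | some c', some ds' => some (app c' ds')
      | _, _ => none
termination_by a _ => sizeOf a

def rsubstList (k : ℕ) : List Rig → List Rig → Option (List Rig)
  | [], bs => if bs.isEmpty then some [] else none
  | d :: ds, bs =>
      match rsubst k d (bs.take (countR k d)), rsubstList k ds (bs.drop (countR k d)) with
      | some d', some ds' => some (d' :: ds')
      | _, _ => none
termination_by ds _ => sizeOf ds
end

/-- One-step rigid resource reduction `→_r` (contextual closure of
`⟨λx.a⟩b⃗ →_r a[b⃗/x]`); the result may be `0` (i.e. `none`), which annihilates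
the surrounding context. -/
inductive RStep : Rig → Option Rig → Prop
  | beta (a : Rig) (bs : List Rig) : RStep (app (lam a) bs) (rsubst 0 a bs)
  | lam {a r} : RStep a r → RStep (lam a) (r.map lam)
  | head {c r} (ds : List Rig) : RStep c r → RStep (app c ds) (r.map (fun c' => app c' ds))
  | arg {d r} (c : Rig) (ds₁ ds₂ : List Rig) :
      RStep d r → RStep (app c (ds₁ ++ d :: ds₂)) (r.map (fun d' => app c (ds₁ ++ d' :: ds₂)))

/-- `→_r` on rigid terms extended with `0`; `0` is inert. -/
inductive RStepO : Option Rig → Option Rig → Prop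
  | mk {a r} : RStep a r → RStepO (some a) r

/-- `r` is a `→_r`-normal form (`0` is one). -/
def RNormal (r : Option Rig) : Prop := ¬∃ r', RStepO r r'

/-- The head of the application spine is a variable, with no λ on the spine. -/
def rNeutral : Rig → Bool
  | var _ => true
  | lam _ => false
  | app c _ => rNeutral c

/-- Rigid head-normal forms among nonzero terms: `λx₁…λxₘ.⟨…⟨x⟩d⃗₁…⟩d⃗ₙ`
(the term `0` is a head-normal form, but it is treated separately). -/
def rIsHNF : Rig → Prop
  | var _ => True
  | lam a => rIsHNF a
  | app c _ => rNeutral c = true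

/-- The rigid head-reduction function `H_r`: contracts the head redex, identity on
head-normal forms; the result may be `0` (i.e. `none`). -/
def Hr : Rig → Option Rig
  | var n => some (var n)
  | lam a => (Hr a).map lam
  | app (lam a) bs => rsubst 0 a bs
  | app (var n) ds => some (app (var n) ds)
  | app (app c₁ c₂) ds => (Hr (app c₁ c₂)).map (fun c' => app c' ds)

/-- `H_r` extended to terms-or-`0`. -/
def HrO : Option Rig → Option Rig := fun r => r.bind Hr

mutual
/-- The rigid left-parallel reduction function `L_r`: identity on `→_r`-normal forms,
applied componentwise to the argument lists on head-normal forms, contraction of the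
head redex otherwise; the result may be `0` (i.e. `none`). -/
def Lr : Rig → Option Rig
  | var n => some (var n)
  | lam a => (Lr a).map lam
  | app (lam a) bs => rsubst 0 a bs
  | app (var n) ds => (LrList ds).map (fun ds' => app (var n) ds')
  | app (app c₁ c₂) ds =>
      if rNeutral (app c₁ c₂) then
        match Lr (app c₁ c₂), LrList ds with
        | some c', some ds' => some (app c' ds')
        | _, _ => none
      else (Lr (app c₁ c₂)).map (fun c' => app c' ds)
termination_by a => sizeOf a

def LrList : List Rig → Option (List Rig)
  | [] => some []
  | d :: ds =>
      match Lr d, LrList ds with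
      | some d', some ds' => some (d' :: ds')
      | _, _ => none
termination_by ds => sizeOf ds
end

/-- `L_r` extended to terms-or-`0`. -/
def LrO : Option Rig → Option Rig := fun r => r.bind Lr

/-- Positive resource terms: no empty list/multiset occurs as the argument of an
application. -/
inductive rPositive : Rig → Prop
  | var (n : ℕ) : rPositive (var n)
  | lam {a} : rPositive a → rPositive (lam a)
  | app {c : Rig} {ds : List Rig} :
      rPositive c → ds ≠ [] → (∀ d ∈ ds, rPositive d) → rPositive (app c ds)

end Rig

/-- The rigid expansion `T_r(M)` of a λ-term (equivalently, the support of its Taylor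
expansion, with multisets presented by lists: `Texp M` is closed under permutation of
argument lists). -/
def Texp : Lam → Set Rig
  | Lam.var n => {Rig.var n}
  | Lam.lam M => {a | ∃ b ∈ Texp M, a = Rig.lam b}
  | Lam.app P Q => {a | ∃ c ∈ Texp P, ∃ ds : List Rig, (∀ d ∈ ds, d ∈ Texp Q) ∧ a = Rig.app c ds}

namespace Rig

/-- The support of the `n`-linear substitution `∂_k a · b̄`, where the multiset `b̄` is
presented by the list `bs`: the finite formal sum (multiset) of all nonzero results of
rigid substitutions along bijective assignments, i.e. permutations of `bs`. -/
def permSubst (k : ℕ) (a : Rig) (bs : List Rig) : Multiset Rig :=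
  ↑(bs.permutations.filterMap (fun bs' => rsubst k a bs'))

/-- One step of non-erasing ε-resource reduction `→^{¬e}_{∂ε}` out of a single resource
term, producing a finite formal sum (a multiset) of resource terms: non-erasing resource
β-steps `⟨λx.a⟩b̄ → ∂_x a · b̄` (with `x ∈ FV(a)`) and resource σ₁-steps, under any
context. -/
inductive NEStep : Rig → Multiset Rig → Prop
  | beta {a : Rig} (bs : List Rig) :
      0 < countR 0 a → NEStep (app (lam a) bs) (permSubst 0 a bs)
  | sigma (a : Rig) (ts qs : List Rig) :
      NEStep (app (app (lam a) ts) qs) {app (lam (app a (liftRList 0 qs))) ts}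
  | lam {a σ} : NEStep a σ → NEStep (lam a) (σ.map lam)
  | head {c σ} (ds : List Rig) : NEStep c σ → NEStep (app c ds) (σ.map (fun c' => app c' ds))
  | arg {d σ} (c : Rig) (ds₁ ds₂ : List Rig) :
      NEStep d σ → NEStep (app c (ds₁ ++ d :: ds₂)) (σ.map (fun d' => app c (ds₁ ++ d' :: ds₂)))

/-- Non-erasing ε-resource reduction on finite formal sums, extended by linearity. -/
def NEStepSum (σ τ : Multiset Rig) : Prop :=
  ∃ (a : Rig) (ρ υ : Multiset Rig), σ = a ::ₘ ρ ∧ NEStep a υ ∧ τ = υ + ρ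

/-- `σ` is a `→^{¬e}_{∂ε}`-normal form. -/
def NENormal (σ : Multiset Rig) : Prop := ¬∃ τ, NEStepSum σ τ

end Rig

/-- One step of non-erasing ε-reduction on λ-terms: non-erasing β-steps
`(λx.M)N → M[N/x]` (with `x ∈ FV(M)`) together with σ₁-steps
`((λx.M)N)P → (λx.MP)N` (`x ∉ FV(P)`), under any context. -/
inductive NEeps : Lam → Lam → Prop
  | beta {M : Lam} (N : Lam) :
      0 < Lam.count 0 M → NEeps (Lam.app (Lam.lam M) N) (Lam.subst M 0 N)
  | sigma (M N P : Lam) :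
      NEeps (Lam.app (Lam.app (Lam.lam M) N) P)
        (Lam.app (Lam.lam (Lam.app M (Lam.lift 0 P))) N)
  | lam {M M'} : NEeps M M' → NEeps (Lam.lam M) (Lam.lam M')
  | appL {P P' Q} : NEeps P P' → NEeps (Lam.app P Q) (Lam.app P' Q)
  | appR {P Q Q'} : NEeps Q Q' → NEeps (Lam.app P Q) (Lam.app P Q')

/-- The set `S` of λ-terms. -/
inductive SLam : Lam → Prop
  | varApp (n : ℕ) (Ms : List Lam) :
      (∀ M ∈ Ms, SLam M) → SLam (Lam.mkApps (Lam.var n) Ms)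
  | lam {M} : SLam M → SLam (Lam.lam M)
  | redex (M₀ M₁ : Lam) (Ms : List Lam) :
      SLam M₁ → SLam (Lam.mkApps (Lam.subst M₀ 0 M₁) Ms) →
      SLam (Lam.mkApps (Lam.app (Lam.lam M₀) M₁) Ms)

/-- λI-terms: every abstraction binds a variable occurring free in its body. -/
def LamI : Lam → Prop
  | Lam.var _ => True
  | Lam.lam M => LamI M ∧ 0 < Lam.count 0 M
  | Lam.app P Q => LamI P ∧ LamI Q

/-!
Extend rigid substitution to sets of rigid terms `S`, `T` by collecting all nonzero `a[bs/x]` with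
`a ∈ S` and `bs` a list over `T`. This operation obeys the defining equations of ordinary
substitution: under an abstraction `T` gets shifted, and in an application `⟨c⟩ds` the list over `T`
is cut into consecutive pieces for `c` and for the entries of `ds`, which loses nothing since lists
over `T` are closed under concatenation and splitting. As `T_r` turns the constructors of λ-terms
into the corresponding operations on sets, the theorem follows by induction on `M`.
-/

section ListsOver

variable {α β : Type*}

/-- The lists all of whose entries lie in `S`; for `S` a set of rigid terms, these are the rigid
monomials over `S`. -/
def listsOver (S : Set α) : Set (List α) :=
  {l | ∀ a ∈ l, a ∈ S}

theorem nil_mem_listsOver (S : Set α) : [] ∈ listsOver S :=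
  List.forall_mem_nil _

theorem cons_mem_listsOver {S : Set α} {a : α} {l : List α} :
    a :: l ∈ listsOver S ↔ a ∈ S ∧ l ∈ listsOver S :=
  List.forall_mem_cons

theorem append_mem_listsOver {S : Set α} {l₁ l₂ : List α} :
    l₁ ++ l₂ ∈ listsOver S ↔ l₁ ∈ listsOver S ∧ l₂ ∈ listsOver S :=
  List.forall_mem_append

theorem listsOver_image (f : α → β) (S : Set α) :
    listsOver (f '' S) = List.map f '' listsOver S :=
  calc listsOver (f '' S)
      = Set.range (List.map (f ∘ ((↑) : S → α))) := by
        rw [Set.range_list_map, Set.range_comp, Subtype.range_coe]; rfl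
    _ = List.map f '' listsOver S := by
        rw [← List.map_comp_map, Set.range_comp, Set.range_list_map_coe]; rfl

end ListsOver

namespace Rig

theorem liftRList_eq_map (d : ℕ) (as : List Rig) : liftRList d as = as.map (liftR d) := by
  induction as with
  | nil => rw [liftRList, List.map_nil]
  | cons a as ih => rw [liftRList, ih, List.map_cons]

theorem rsubst_var_self_eq_some_iff {k : ℕ} {bs : List Rig} {u : Rig} :
    rsubst k (var k) bs = some u ↔ bs = [u] := by
  rcases bs with _ | ⟨b, _ | ⟨b', bs⟩⟩ <;> simp [rsubst]

theorem rsubst_var_of_ne_eq_some_iff {k n : ℕ} (hn : n ≠ k) {bs : List Rig} {u : Rig} :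
    rsubst k (var n) bs = some u ↔
      bs = [] ∧ (if k < n then var (n - 1) else var n) = u := by
  rcases bs with _ | ⟨b, _ | ⟨b', bs⟩⟩ <;> simp [rsubst, hn]

theorem rsubst_lam_eq_some_iff {k : ℕ} {a : Rig} {bs : List Rig} {u : Rig} :
    rsubst k (lam a) bs = some u ↔
      ∃ v, rsubst (k + 1) a (bs.map (liftR 0)) = some v ∧ lam v = u := by
  rw [rsubst, liftRList_eq_map, Option.map_eq_some_iff]

theorem rsubst_app (k : ℕ) (c : Rig) (ds bs : List Rig) :
    rsubst k (app c ds) bs =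
      Option.map₂ app (rsubst k c (bs.take (countR k c)))
        (rsubstList k ds (bs.drop (countR k c))) := by
  rw [rsubst]
  cases rsubst k c _ <;> cases rsubstList k ds _ <;> rfl

theorem rsubstList_nil_eq_some_iff {k : ℕ} {bs us : List Rig} :
    rsubstList k [] bs = some us ↔ bs = [] ∧ us = [] := by
  cases bs <;> simp [rsubstList, eq_comm]

theorem rsubstList_cons (k : ℕ) (d : Rig) (ds bs : List Rig) :
    rsubstList k (d :: ds) bs =
      Option.map₂ List.cons (rsubst k d (bs.take (countR k d)))
        (rsubstList k ds (bs.drop (countR k d))) := by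
  rw [rsubstList]
  cases rsubst k d _ <;> cases rsubstList k ds _ <;> rfl

mutual
theorem length_eq_countR_of_rsubst_eq_some {k : ℕ} {bs : List Rig} {u : Rig} :
    ∀ {a : Rig}, rsubst k a bs = some u → bs.length = countR k a
  | var n, h => by
    rw [countR]
    rcases eq_or_ne n k with rfl | hn
    · rw [rsubst_var_self_eq_some_iff.1 h, if_pos rfl, List.length_singleton]
    · rw [((rsubst_var_of_ne_eq_some_iff hn).1 h).1, if_neg hn, List.length_nil]
  | lam a, h => by
    obtain ⟨v, hv, -⟩ := rsubst_lam_eq_some_iff.1 h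
    rw [countR, ← length_eq_countR_of_rsubst_eq_some hv, List.length_map]
  | app c ds, h => by
    rw [rsubst_app, Option.map₂_eq_some_iff] at h
    obtain ⟨c', ds', hc, hds, -⟩ := h
    rw [countR, ← length_eq_countR_of_rsubst_eq_some hc,
      ← length_eq_countRList_of_rsubstList_eq_some hds, ← List.length_append,
      List.take_append_drop]
termination_by a => sizeOf a

theorem length_eq_countRList_of_rsubstList_eq_some {k : ℕ} {bs us : List Rig} :
    ∀ {ds : List Rig}, rsubstList k ds bs = some us → bs.length = countRList k ds
  | [], h => by
    rw [(rsubstList_nil_eq_some_iff.1 h).1, countRList, List.length_nil]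
  | d :: ds, h => by
    rw [rsubstList_cons, Option.map₂_eq_some_iff] at h
    obtain ⟨d', ds', hd, hds, -⟩ := h
    rw [countRList, ← length_eq_countR_of_rsubst_eq_some hd,
      ← length_eq_countRList_of_rsubstList_eq_some hds, ← List.length_append,
      List.take_append_drop]
termination_by ds => sizeOf ds
end

theorem map₂_rsubst_take_rsubstList_drop_eq_some_iff {γ : Type*} {f : Rig → List Rig → γ}
    {k : ℕ} {c : Rig} {ds bs : List Rig} {v : γ} :
    Option.map₂ f (rsubst k c (bs.take (countR k c)))
        (rsubstList k ds (bs.drop (countR k c))) = some v ↔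
      ∃ bs₁ bs₂ c' ds', bs = bs₁ ++ bs₂ ∧ rsubst k c bs₁ = some c' ∧
        rsubstList k ds bs₂ = some ds' ∧ f c' ds' = v := by
  rw [Option.map₂_eq_some_iff]
  constructor
  · rintro ⟨c', ds', hc, hds, hv⟩
    exact ⟨_, _, c', ds', (List.take_append_drop _ bs).symm, hc, hds, hv⟩
  · rintro ⟨bs₁, bs₂, c', ds', rfl, hc, hds, hv⟩
    rw [← length_eq_countR_of_rsubst_eq_some hc, List.take_left, List.drop_left]
    exact ⟨c', ds', hc, hds, hv⟩

theorem rsubst_app_eq_some_iff {k : ℕ} {c : Rig} {ds bs : List Rig} {u : Rig} :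
    rsubst k (app c ds) bs = some u ↔
      ∃ bs₁ bs₂ c' ds', bs = bs₁ ++ bs₂ ∧ rsubst k c bs₁ = some c' ∧
        rsubstList k ds bs₂ = some ds' ∧ app c' ds' = u := by
  rw [rsubst_app, map₂_rsubst_take_rsubstList_drop_eq_some_iff]

theorem rsubstList_cons_eq_some_iff {k : ℕ} {d : Rig} {ds bs us : List Rig} :
    rsubstList k (d :: ds) bs = some us ↔
      ∃ bs₁ bs₂ d' ds', bs = bs₁ ++ bs₂ ∧ rsubst k d bs₁ = some d' ∧
        rsubstList k ds bs₂ = some ds' ∧ d' :: ds' = us := by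
  rw [rsubstList_cons, map₂_rsubst_take_rsubstList_drop_eq_some_iff]

/-- The set of all nonzero `a[bs/k]` with `a ∈ S` and `bs` a list over `T`: rigid substitution
extended to sets of rigid terms. -/
def substSet (k : ℕ) (S T : Set Rig) : Set Rig :=
  {u | ∃ a ∈ S, ∃ bs ∈ listsOver T, rsubst k a bs = some u}

theorem substSet_singleton_var_self (k : ℕ) (T : Set Rig) : substSet k {var k} T = T := by
  ext u
  simp only [substSet, Set.mem_ofPred_eq, Set.mem_singleton_iff, exists_eq_left,
    rsubst_var_self_eq_some_iff, exists_eq_right, cons_mem_listsOver, nil_mem_listsOver, and_true]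

theorem substSet_singleton_var_of_ne {k n : ℕ} (hn : n ≠ k) (T : Set Rig) :
    substSet k {var n} T = {if k < n then var (n - 1) else var n} := by
  ext u
  constructor
  · rintro ⟨_, rfl, bs, -, h⟩
    exact ((rsubst_var_of_ne_eq_some_iff hn).1 h).2.symm
  · rintro rfl
    exact ⟨var n, rfl, [], nil_mem_listsOver T, (rsubst_var_of_ne_eq_some_iff hn).2 ⟨rfl, rfl⟩⟩

theorem substSet_image_lam (k : ℕ) (S T : Set Rig) :
    substSet k (lam '' S) T = lam '' substSet (k + 1) S (liftR 0 '' T) := by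
  ext u
  rw [substSet, substSet, listsOver_image]
  constructor
  · rintro ⟨_, ⟨a, ha, rfl⟩, bs, hbs, h⟩
    obtain ⟨v, hv, rfl⟩ := rsubst_lam_eq_some_iff.1 h
    exact ⟨v, ⟨a, ha, _, ⟨bs, hbs, rfl⟩, hv⟩, rfl⟩
  · rintro ⟨v, ⟨a, ha, _, ⟨bs, hbs, rfl⟩, hv⟩, rfl⟩
    exact ⟨lam a, ⟨a, ha, rfl⟩, bs, hbs, rsubst_lam_eq_some_iff.2 ⟨v, hv, rfl⟩⟩

theorem mem_listsOver_substSet_iff {k : ℕ} {S T : Set Rig} {us : List Rig} :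
    us ∈ listsOver (substSet k S T) ↔
      ∃ ds ∈ listsOver S, ∃ bs ∈ listsOver T, rsubstList k ds bs = some us := by
  constructor
  · induction us with
    | nil =>
      intro _
      exact ⟨[], nil_mem_listsOver S, [], nil_mem_listsOver T,
        rsubstList_nil_eq_some_iff.2 ⟨rfl, rfl⟩⟩
    | cons u us ih =>
      intro h
      obtain ⟨⟨d, hd, bs₁, hbs₁, hu⟩, hus⟩ := cons_mem_listsOver.1 h
      obtain ⟨ds, hds, bs₂, hbs₂, hus⟩ := ih hus
      exact ⟨d :: ds, cons_mem_listsOver.2 ⟨hd, hds⟩, bs₁ ++ bs₂,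
        append_mem_listsOver.2 ⟨hbs₁, hbs₂⟩,
        rsubstList_cons_eq_some_iff.2 ⟨bs₁, bs₂, u, us, rfl, hu, hus, rfl⟩⟩
  · rintro ⟨ds, hds, bs, hbs, h⟩
    induction ds generalizing us bs with
    | nil =>
      rw [(rsubstList_nil_eq_some_iff.1 h).2]
      exact nil_mem_listsOver _
    | cons d ds ih =>
      obtain ⟨bs₁, bs₂, u, us, rfl, hu, hus, rfl⟩ := rsubstList_cons_eq_some_iff.1 h
      obtain ⟨hd, hds⟩ := cons_mem_listsOver.1 hds
      obtain ⟨hbs₁, hbs₂⟩ := append_mem_listsOver.1 hbs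
      exact cons_mem_listsOver.2 ⟨⟨d, hd, bs₁, hbs₁, hu⟩, ih hds bs₂ hbs₂ hus⟩

theorem substSet_image2_app (k : ℕ) (S S' T : Set Rig) :
    substSet k (Set.image2 app S (listsOver S')) T =
      Set.image2 app (substSet k S T) (listsOver (substSet k S' T)) := by
  ext u
  constructor
  · rintro ⟨_, ⟨c, hc, ds, hds, rfl⟩, bs, hbs, h⟩
    obtain ⟨bs₁, bs₂, c', ds', rfl, hc', hds', rfl⟩ := rsubst_app_eq_some_iff.1 h
    obtain ⟨hbs₁, hbs₂⟩ := append_mem_listsOver.1 hbs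
    exact ⟨c', ⟨c, hc, bs₁, hbs₁, hc'⟩, ds',
      mem_listsOver_substSet_iff.2 ⟨ds, hds, bs₂, hbs₂, hds'⟩, rfl⟩
  · rintro ⟨c', ⟨c, hc, bs₁, hbs₁, hc'⟩, ds', hds', rfl⟩
    obtain ⟨ds, hds, bs₂, hbs₂, hds'⟩ := mem_listsOver_substSet_iff.1 hds'
    exact ⟨app c ds, ⟨c, hc, ds, hds, rfl⟩, bs₁ ++ bs₂,
      append_mem_listsOver.2 ⟨hbs₁, hbs₂⟩,
      rsubst_app_eq_some_iff.2 ⟨bs₁, bs₂, c', ds', rfl, hc', hds', rfl⟩⟩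

end Rig

theorem Texp_lam (M : Lam) : Texp (Lam.lam M) = Rig.lam '' Texp M := by
  simp only [Texp, Set.image, eq_comm]

theorem Texp_app (P Q : Lam) :
    Texp (Lam.app P Q) = Set.image2 Rig.app (Texp P) (listsOver (Texp Q)) := by
  simp only [Texp, Set.image2, listsOver, Set.mem_ofPred_eq, eq_comm]

theorem Texp_lift (d : ℕ) (M : Lam) : Texp (Lam.lift d M) = Rig.liftR d '' Texp M := by
  induction M generalizing d with
  | var n =>
    simp only [Lam.lift, Texp, Set.image_singleton, Rig.liftR]
    split_ifs <;> rfl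
  | lam M ih =>
    simp only [Lam.lift, Texp_lam, ih, Set.image_image, Rig.liftR]
  | app P Q ihP ihQ =>
    simp only [Lam.lift, Texp_app, ihP, ihQ, listsOver_image, Set.image_image2,
      Set.image2_image_left, Set.image2_image_right, Rig.liftR, Rig.liftRList_eq_map]

/-- `T_r(M[N/x]) = { a[b⃗/x] | a ∈ T_r(M), b⃗ a list of elements of T_r(N),
a[b⃗/x] ≠ 0 }`. -/
theorem Texp_subst (M N : Lam) (k : ℕ) :
    Texp (Lam.subst M k N) =
      {u : Rig | ∃ a ∈ Texp M, ∃ bs : List Rig,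
        (∀ b ∈ bs, b ∈ Texp N) ∧ Rig.rsubst k a bs = some u} := by
  change Texp (Lam.subst M k N) = Rig.substSet k (Texp M) (Texp N)
  induction M generalizing k N with
  | var n =>
    rw [Lam.subst, Texp]
    rcases eq_or_ne n k with rfl | hn
    · rw [if_pos rfl, Rig.substSet_singleton_var_self]
    · rw [if_neg hn, Rig.substSet_singleton_var_of_ne hn]
      split_ifs <;> rfl
  | lam M ih => rw [Lam.subst, Texp_lam, Texp_lam, ih, Texp_lift, Rig.substSet_image_lam]
  | app P Q ihP ihQ => rw [Lam.subst, Texp_app, Texp_app, ihP, ihQ, Rig.substSet_image2_app]
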